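/- arXiv:2603.17772 — 2 statements merged into one kernel-verified Lean document; each statement's English description precedes it below -/
import Mathlib

section
/- Let n ≥ 3 and let f : S₀ⁿ → A be onto and pairwise strategy-proof. Let R̄ ∈ S₀ⁿ be a profile in which every agent has a single-peaked preference, τ(R̄_i) = 0 for all i ∈ {1,…,n−1}, and τ(R̄_n) = 1, and set x = f(R̄). Then for every profile R ∈ S₀ⁿ with R ≠ R^{0N} and x < τ̲(R), f(R) = τ̲(R). -/
/-- The set of alternatives: the closed interval [0,1]. -/
abbrev A : Type := Set.Icc (0:ℝ) 1

def zeroA : A := ⟨0, by constructor <;> norm_num⟩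
def oneA : A := ⟨1, by constructor <;> norm_num⟩

/-- A preference: a complete (total) and transitive binary relation on A. -/
structure Pref : Type where
  rel : A → A → Prop
  total : ∀ a b : A, rel a b ∨ rel b a
  trans : ∀ a b c : A, rel a b → rel b c → rel a c

/-- Strict part of a preference. -/
def Pref.P (R : Pref) (a b : A) : Prop := R.rel a b ∧ ¬ R.rel b a

/-- `p` is a peak of `R`: `R` is single-peaked with peak `p`. -/
def Pref.IsPeak (R : Pref) (p : A) : Prop :=
  ∀ a b : A, ((p ≤ a ∧ a < b) ∨ (b < a ∧ a ≤ p)) → R.P a b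

/-- Single-peaked preferences. -/
def SinglePeaked (R : Pref) : Prop := ∃ p : A, R.IsPeak p

/-- The completely indifferent preference R⁰. -/
def R0 : Pref :=
  ⟨fun _ _ => True, fun _ _ => Or.inl trivial, fun _ _ _ _ _ => trivial⟩

/-- The augmented domain S₀ = S ∪ {R⁰}. -/
def S0 : Type := {R : Pref // SinglePeaked R ∨ R = R0}

/-- The completely indifferent profile R^{0N}. -/
def indiffProfile (n : ℕ) : Fin n → S0 := fun _ => ⟨R0, Or.inr rfl⟩

open Classical in
/-- The peak of a single-peaked preference (junk value `zeroA` otherwise). -/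
noncomputable def peak (R : Pref) : A :=
  if h : SinglePeaked R then h.choose else zeroA

/-- τ̲(R): the smallest peak among non-indifferent agents (as a real number). -/
noncomputable def tmin {n : ℕ} (R : Fin n → S0) : ℝ :=
  sInf {x : ℝ | ∃ i : Fin n, (R i).1 ≠ R0 ∧ ((peak (R i).1 : ℝ) = x)}

/-- τ̄(R): the largest peak among non-indifferent agents (as a real number). -/
noncomputable def tmax {n : ℕ} (R : Fin n → S0) : ℝ :=
  sSup {x : ℝ | ∃ i : Fin n, (R i).1 ≠ R0 ∧ ((peak (R i).1 : ℝ) = x)}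

/-- Onto-ness. -/
def Onto {n : ℕ} (f : (Fin n → S0) → A) : Prop := ∀ a : A, ∃ R : Fin n → S0, f R = a

/-- (Individual) strategy-proofness. -/
def StrategyProof {n : ℕ} (f : (Fin n → S0) → A) : Prop :=
  ∀ (R : Fin n → S0) (i : Fin n) (Ri' : S0),
    (R i).1.rel (f R) (f (Function.update R i Ri'))

/-- No profitable deviation by the coalition `S`. -/
def CoalitionSP {n : ℕ} (f : (Fin n → S0) → A) (S : Finset (Fin n)) : Prop :=
  ¬ ∃ R R' : Fin n → S0,
      (∀ i ∉ S, R' i = R i) ∧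
      (∀ i ∈ S, (R i).1.rel (f R') (f R)) ∧
      (∃ j ∈ S, (R j).1.P (f R') (f R))

/-- Group strategy-proofness. -/
def GroupSP {n : ℕ} (f : (Fin n → S0) → A) : Prop :=
  ∀ S : Finset (Fin n), S.Nonempty → CoalitionSP f S

/-- Pairwise strategy-proofness. -/
def PairwiseSP {n : ℕ} (f : (Fin n → S0) → A) : Prop :=
  ∀ S : Finset (Fin n), S.Nonempty → S.card ≤ 2 → CoalitionSP f S

/-- No deviation making every member of `S` strictly better off. -/
def WeakCoalitionSP {n : ℕ} (f : (Fin n → S0) → A) (S : Finset (Fin n)) : Prop :=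
  ¬ ∃ R R' : Fin n → S0,
      (∀ i ∉ S, R' i = R i) ∧
      (∀ i ∈ S, (R i).1.P (f R') (f R))

/-- Weak group strategy-proofness. -/
def WeakGroupSP {n : ℕ} (f : (Fin n → S0) → A) : Prop :=
  ∀ S : Finset (Fin n), S.Nonempty → WeakCoalitionSP f S

/-- `a` is efficient at the profile `R`. -/
def EfficientAt {n : ℕ} (R : Fin n → S0) (a : A) : Prop :=
  ¬ ∃ b : A, b ≠ a ∧ (∀ i : Fin n, (R i).1.rel b a) ∧ (∃ j : Fin n, (R j).1.P b a)

/-- Efficiency of a social choice function. -/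
def Efficient {n : ℕ} (f : (Fin n → S0) → A) : Prop := ∀ R : Fin n → S0, EfficientAt R (f R)

/-- The tops-only property. -/
def TopsOnly {n : ℕ} (f : (Fin n → S0) → A) : Prop :=
  ∀ R R' : Fin n → S0,
    (∀ i : Fin n, (R i).1 = R0 ↔ (R' i).1 = R0) →
    (∀ i : Fin n, (R i).1 ≠ R0 → peak (R i).1 = peak (R' i).1) →
    f R = f R'

/-- Target rules with a default. -/
def IsTargetRule {n : ℕ} (f : (Fin n → S0) → A) : Prop :=
  ∃ x y : A, f (indiffProfile n) = y ∧
    ∀ R : Fin n → S0, R ≠ indiffProfile n →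
      ((tmin R ≤ (x : ℝ) ∧ (x : ℝ) ≤ tmax R) → f R = x) ∧
      ((x : ℝ) < tmin R → (f R : ℝ) = tmin R) ∧
      (tmax R < (x : ℝ) → (f R : ℝ) = tmax R)

/-!
Let `x` be the outcome when the peaks `0` and `1` are both present; it does not depend on the other
agents, since an indifferent agent would help whichever of the two extreme agents gains. Let
`m ≥ x` be the lowest peak, held by agent `i`. No outcome lies below `m`: moving the agents to a
preference that has peak `m` and ranks everything left of `m` above everything right of it would
not change such an outcome, in contradiction to unanimity. Nor does an outcome lie above `m` when
`i` has such a steep preference, some `j ≠ i` has peak `1` and all others are indifferent, because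
giving some agent the peak `0` yields `x`, which `i` prefers. Starting from that profile, introduce
the preferences of `R` one agent at a time, that of `j` last. The outcome stays at `m`, as any
increase would be a joint gain of `j` and the agent who moves.
-/

theorem hybrid_induction {ι α : Type*} [Finite ι] {p : (ι → α) → Prop} {Q Q' : ι → α} (hQ : p Q)
    (step : ∀ V W b, Set.EqOn V W {b}ᶜ → W b = Q b → V b = Q' b → Q b ≠ Q' b →
      (∀ a, V a = Q a ∨ V a = Q' a) → p W → p V) : p Q' := by
  classical
  have := Fintype.ofFinite ι
  suffices key : ∀ T : Finset ι, p (T.piecewise Q' Q) by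
    simpa only [Finset.piecewise_univ] using key Finset.univ
  intro T
  induction T using Finset.induction_on with
  | empty => simpa only [Finset.piecewise_empty] using hQ
  | insert b T hb ih =>
    have hTb : T.piecewise Q' Q b = Q b := Finset.piecewise_eq_of_notMem _ _ _ hb
    by_cases hQb : Q b = Q' b
    · rwa [Finset.piecewise_insert, ← hQb, ← hTb, Function.update_eq_self]
    · refine step _ _ b ?_ hTb ?_ hQb ?_ ih
      · intro a ha
        rw [Finset.piecewise_insert, Function.update_of_ne ha]
      · exact Finset.piecewise_eq_of_mem _ _ _ (Finset.mem_insert_self b T)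
      · intro a
        by_cases ha : a ∈ insert b T
        · exact .inr (Finset.piecewise_eq_of_mem _ _ _ ha)
        · exact .inl (Finset.piecewise_eq_of_notMem _ _ _ ha)

theorem eqOn_update_compl {ι α : Type*} [DecidableEq ι] (W : ι → α) (b : ι) (r : α) :
    Set.EqOn (Function.update W b r) W {b}ᶜ :=
  fun _ ha => Function.update_of_ne ha r W

namespace Pref

theorem rel_of_eq_R0 {R : Pref} (h : R = R0) (a b : A) : R.rel a b := by
  rw [h]
  trivial

theorem P.asymm {R : Pref} {a b : A} (h : R.P a b) : ¬ R.P b a := fun h' => h.2 h'.1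

theorem IsPeak.P_of_ne {R : Pref} {p a : A} (h : R.IsPeak p) (ha : a ≠ p) : R.P p a :=
  (lt_or_gt_of_ne ha).elim (fun hlt => h _ _ (.inr ⟨hlt, le_rfl⟩))
    (fun hgt => h _ _ (.inl ⟨le_rfl, hgt⟩))

theorem IsPeak.unique {R : Pref} {p q : A} (hp : R.IsPeak p) (hq : R.IsPeak q) : p = q := by
  by_contra hne
  exact (hp.P_of_ne (Ne.symm hne)).asymm (hq.P_of_ne hne)

theorem IsPeak.ne_R0 {R : Pref} {p : A} (h : R.IsPeak p) : R ≠ R0 := by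
  obtain ⟨a, ha⟩ := exists_ne p
  exact fun hR => (h.P_of_ne ha).2 (rel_of_eq_R0 hR a p)

open Classical in
/-- The utility `t` on `[0, m]` and `-t` on `(m, 1]`: its preference has peak `m` and ranks every
point to the left of `m` above every point to its right. -/
noncomputable def steepUtility (m t : A) : ℝ := if t ≤ m then t else -t

/-- The preference represented by `steepUtility m`. -/
noncomputable def steep (m : A) : Pref where
  rel a b := steepUtility m b ≤ steepUtility m a
  total _ _ := le_total _ _
  trans _ _ _ hab hbc := hbc.trans hab

theorem steep_P {m a b : A} : (steep m).P a b ↔ steepUtility m b < steepUtility m a :=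
  lt_iff_le_not_ge.symm

theorem steep_P_of_le_of_lt {m a b : A} (ha : a ≤ m) (hb : m < b) : (steep m).P a b := by
  rw [steep_P, steepUtility, steepUtility, if_pos ha, if_neg hb.not_ge]
  have hb' : (m : ℝ) < b := hb
  linarith [a.2.1, m.2.1]

theorem isPeak_steep (m : A) : (steep m).IsPeak m := by
  rintro a b (⟨hma, hab⟩ | ⟨hba, ham⟩)
  · rcases hma.eq_or_lt with rfl | hma
    · exact steep_P_of_le_of_lt le_rfl hab
    · rw [steep_P, steepUtility, steepUtility, if_neg hma.not_ge, if_neg (hma.trans hab).not_ge]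
      exact neg_lt_neg hab
  · rwa [steep_P, steepUtility, steepUtility, if_pos ham, if_pos (hba.le.trans ham)]

end Pref

theorem zeroA_ne_oneA : zeroA ≠ oneA := fun h => zero_ne_one (congrArg Subtype.val h)

theorem isPeak_peak {R : Pref} (h : SinglePeaked R) : R.IsPeak (peak R) := by
  rw [peak, dif_pos h]
  exact h.choose_spec

namespace S0

/-- The indifferent preference as an element of the domain. -/
def indiff : S0 := ⟨R0, .inr rfl⟩

/-- `Pref.steep m` as an element of the domain. -/
noncomputable def steep (m : A) : S0 := ⟨Pref.steep m, .inl ⟨m, Pref.isPeak_steep m⟩⟩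

theorem isPeak_steep (m : A) : (steep m).1.IsPeak m := Pref.isPeak_steep m

/-- Indifferent, or single-peaked with peak at least `m`. Required of all agents, it says
`m ≤ τ̲(R)` without the convention for the infimum of an empty set. -/
def PeakAtLeast (m : A) (r : S0) : Prop := r.1 = R0 ∨ ∃ p, m ≤ p ∧ r.1.IsPeak p

theorem peakAtLeast_of_isPeak {m p : A} {r : S0} (hmp : m ≤ p) (h : r.1.IsPeak p) :
    PeakAtLeast m r :=
  .inr ⟨p, hmp, h⟩

end S0

theorem exists_isPeak_tmin {n : ℕ} {R : Fin n → S0} (hR : R ≠ indiffProfile n) :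
    ∃ (i : Fin n) (m : A), (m : ℝ) = tmin R ∧ (R i).1.IsPeak m ∧
      ∀ a, S0.PeakAtLeast m (R a) := by
  let X : Set ℝ := {x : ℝ | ∃ i : Fin n, (R i).1 ≠ R0 ∧ ((peak (R i).1 : ℝ) = x)}
  have hfin : X.Finite :=
    (Set.finite_range fun i => (peak (R i).1 : ℝ)).subset fun _ ⟨i, _, h⟩ => ⟨i, h⟩
  have hne : X.Nonempty := by
    obtain ⟨i, hi⟩ := Function.ne_iff.1 hR
    exact ⟨_, i, fun h => hi (Subtype.ext h), rfl⟩
  have isPeak (a) (ha : (R a).1 ≠ R0) : (R a).1.IsPeak (peak (R a).1) :=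
    isPeak_peak ((R a).2.resolve_right ha)
  obtain ⟨i, hi, him⟩ : tmin R ∈ X := hne.csInf_mem hfin
  refine ⟨i, peak (R i).1, him, isPeak i hi, fun a => or_iff_not_imp_left.2 fun ha => ?_⟩
  have hle : tmin R ≤ peak (R a).1 := csInf_le hfin.bddBelow ⟨a, ha, rfl⟩
  exact ⟨_, him.trans_le hle, isPeak a ha⟩

namespace PairwiseSP

variable {n : ℕ} {f : (Fin n → S0) → A} {V W Q Q' R : Fin n → S0} {b i j k : Fin n} {m : A}

/-- With `b` indifferent, `b` joins the coalition `{b, j}` at no cost. -/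
theorem not_P (hP : PairwiseSP f) (h : Set.EqOn V W {b}ᶜ) (hb : (W b).1 = R0 ∨ b = j) :
    ¬ (W j).1.P (f V) (f W) := by
  intro hj
  refine hP {b, j} (Finset.insert_nonempty _ _) Finset.card_le_two
    ⟨W, V, fun a ha => h fun hab => ha (Finset.mem_insert.2 (.inl hab)), fun a ha => ?_,
      j, by simp only [Finset.mem_insert, Finset.mem_singleton, or_true], hj⟩
  rcases Finset.mem_insert.1 ha with rfl | ha
  · rcases hb with hb | rfl
    · exact Pref.rel_of_eq_R0 hb _ _
    · exact hj.1
  · rw [Finset.mem_singleton.1 ha]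
    exact hj.1

theorem eq_of_isPeak (hP : PairwiseSP f) (h : Set.EqOn V W {b}ᶜ) (hb : (V b).1 = R0 ∨ b = j)
    (hj : (V j).1.IsPeak m) (hW : f W = m) : f V = m := by
  by_contra hne
  exact hP.not_P h.symm hb (hW ▸ hj.P_of_ne hne)

theorem le_of_isPeak_zeroA (hP : PairwiseSP f) (h : Set.EqOn V W {b}ᶜ)
    (hb : (W b).1 = R0 ∨ b = j) (hj : (W j).1.IsPeak zeroA) : f W ≤ f V :=
  not_lt.1 fun hlt => hP.not_P h hb (hj _ _ (.inl ⟨(f V).2.1, hlt⟩))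

theorem le_of_isPeak_oneA (hP : PairwiseSP f) (h : Set.EqOn V W {b}ᶜ)
    (hb : (W b).1 = R0 ∨ b = j) (hj : (W j).1.IsPeak oneA) : f V ≤ f W :=
  not_lt.1 fun hlt => hP.not_P h hb (hj _ _ (.inr ⟨hlt, (f V).2.2⟩))

theorem le_of_steep (hP : PairwiseSP f) (h : Set.EqOn V W {b}ᶜ) (hb : (W b).1 = R0 ∨ b = i)
    (hi : W i = S0.steep m) (hV : f V ≤ m) : f W ≤ m := by
  refine not_lt.1 fun hlt => hP.not_P h hb ?_
  rw [hi]
  exact Pref.steep_P_of_le_of_lt hV hlt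

theorem eq_of_unanimous (hP : PairwiseSP f) (hm : m ∈ Set.range f) (hi : (Q i).1.IsPeak m)
    (hQ : ∀ a, (Q a).1 = R0 ∨ (Q a).1.IsPeak m) : f Q = m := by
  obtain ⟨S, hS⟩ := hm
  have hstart : f (Function.update S i (Q i)) = m :=
    hP.eq_of_isPeak (eqOn_update_compl S i (Q i)) (.inr rfl) (by rwa [Function.update_self]) hS
  refine hybrid_induction (p := fun W => f W = m) hstart fun V W b h _ hVb _ hV hW => ?_
  have hVi : V i = Q i := (hV i).elim (fun h => by rw [h, Function.update_self]) id
  rcases hQ b with hb | hb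
  · exact hP.eq_of_isPeak h (.inl (hVb ▸ hb)) (hVi ▸ hi) hW
  · exact hP.eq_of_isPeak h (.inr rfl) (hVb ▸ hb) hW

theorem eq_of_update_steep (hP : PairwiseSP f) {p : A} (h : Set.EqOn V W {b}ᶜ)
    (hV : V b = S0.steep m) (hW : (W b).1.IsPeak p) (hmp : m ≤ p) (hlt : f W < m) :
    f V = f W := by
  have hVm : f V ≤ m := hP.le_of_steep h.symm (.inr rfl) hV hlt.le
  refine le_antisymm (not_lt.1 fun hWV => ?_) (not_lt.1 fun hVW => ?_)
  · exact hP.not_P h (.inr rfl) (hW _ _ (.inr ⟨hWV, hVm.trans hmp⟩))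
  · refine hP.not_P h.symm (.inr rfl) (j := b) ?_
    rw [hV]
    exact S0.isPeak_steep m _ _ (.inr ⟨hVW, hlt.le⟩)

theorem le_of_forall_peakAtLeast (hP : PairwiseSP f) (hm : m ∈ Set.range f) (hi : (Q i).1 ≠ R0)
    (hQ : ∀ a, S0.PeakAtLeast m (Q a)) : m ≤ f Q := by
  classical
  by_contra! hlt
  let Q' : Fin n → S0 := fun a => if (Q a).1 = R0 then Q a else S0.steep m
  have hunanimous : f Q' = m := by
    refine hP.eq_of_unanimous hm (i := i) ?_ fun a => ?_
    · simp only [Q', if_neg hi]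
      exact S0.isPeak_steep m
    · by_cases ha : (Q a).1 = R0
      · exact .inl (by simpa only [Q', if_pos ha])
      · exact .inr (by simpa only [Q', if_neg ha] using S0.isPeak_steep m)
  have hunchanged : f Q' = f Q := by
    refine hybrid_induction (p := fun W => f W = f Q) rfl fun V W b h hWb hVb hne _ hW => ?_
    have hb : (Q b).1 ≠ R0 := fun hb => hne (if_pos hb).symm
    obtain ⟨p, hmp, hp⟩ := (hQ b).resolve_left hb
    rw [← hW]
    exact hP.eq_of_update_steep h (hVb.trans (if_neg hb)) (hWb ▸ hp) hmp (hW ▸ hlt)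
  exact hlt.ne (hunchanged.symm.trans hunanimous)

theorem eq_of_extremes (hP : PairwiseSP f) (hk : (Q k).1.IsPeak zeroA)
    (hj : (Q j).1.IsPeak oneA) (hQk : Q' k = Q k) (hQj : Q' j = Q j) : f Q' = f Q := by
  refine hybrid_induction (p := fun W => f W = f Q) rfl fun V W b h _ _ hne hV hW => ?_
  have hkb : k ≠ b := fun hkb => hne (hkb ▸ hQk.symm)
  have hjb : j ≠ b := fun hjb => hne (hjb ▸ hQj.symm)
  have hVk : V k = Q k := (hV k).elim id fun h => h.trans hQk
  have hVj : V j = Q j := (hV j).elim id fun h => h.trans hQj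
  let U := Function.update V b S0.indiff
  have hUb : (U b).1 = R0 := congrArg Subtype.val (Function.update_self b S0.indiff V)
  have hUV : Set.EqOn U V {b}ᶜ := eqOn_update_compl V b S0.indiff
  have hUk : (U k).1.IsPeak zeroA := ((hUV hkb).trans hVk) ▸ hk
  have hUj : (U j).1.IsPeak oneA := ((hUV hjb).trans hVj) ▸ hj
  have eq_U {T : Fin n → S0} (hT : Set.EqOn T U {b}ᶜ) : f T = f U :=
    le_antisymm (hP.le_of_isPeak_oneA hT (.inl hUb) hUj)
      (hP.le_of_isPeak_zeroA hT (.inl hUb) hUk)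
  rw [eq_U hUV.symm, ← eq_U (h.symm.trans hUV.symm), hW]

theorem exists_extremes_ne (hP : PairwiseSP f) (hn : 3 ≤ n) (hk : (Q k).1.IsPeak zeroA)
    (hj : (Q j).1.IsPeak oneA) (i : Fin n) :
    ∃ (Q' : Fin n → S0) (j' : Fin n), j' ≠ i ∧ (Q' k).1.IsPeak zeroA ∧
      (Q' j').1.IsPeak oneA ∧ f Q' = f Q := by
  obtain ⟨a, hak, haj⟩ := Fin.exists_ne_and_ne_of_two_lt k j hn
  rcases eq_or_ne j i with rfl | hji
  · have hQk : Function.update Q a (Q j) k = Q k := Function.update_of_ne hak.symm _ _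
    have hQj : Function.update Q a (Q j) j = Q j := Function.update_of_ne haj.symm _ _
    exact ⟨Function.update Q a (Q j), a, haj, hQk ▸ hk, by rwa [Function.update_self],
      hP.eq_of_extremes hk hj hQk hQj⟩
  · exact ⟨Q, j, hji, hk, hj, rfl⟩

theorem le_of_steep_of_extremes (hP : PairwiseSP f) (hk : (Q k).1.IsPeak zeroA)
    (hj : (Q j).1.IsPeak oneA) (hQm : f Q ≤ m) (hWi : W i = S0.steep m) (hWj : W j = Q j)
    (hW0 : ∀ a, a ≠ i → a ≠ j → (W a).1 = R0) : f W ≤ m := by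
  have hkj : k ≠ j := by
    rintro rfl
    exact zeroA_ne_oneA (hk.unique hj)
  have hlow : f (Function.update W k (Q k)) = f Q :=
    hP.eq_of_extremes hk hj (Function.update_self _ _ _)
      ((Function.update_of_ne hkj.symm _ _).trans hWj)
  have hWk : (W k).1 = R0 ∨ k = i := or_iff_not_imp_right.2 fun hki => hW0 k hki hkj
  exact hP.le_of_steep (eqOn_update_compl W k (Q k)) hWk hWi (hlow.trans_le hQm)

theorem eq_of_isPeak_oneA_of_le (hP : PairwiseSP f) (hm : m ∈ Set.range f) (hQm : f Q ≤ m)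
    (hQi : (Q i).1.IsPeak m) (hi : (Q' i).1.IsPeak m) (hQj : (Q j).1.IsPeak oneA)
    (hj : Q' j = Q j) (hQ0 : ∀ a, a ≠ i → a ≠ j → (Q a).1 = R0)
    (hQ' : ∀ a, S0.PeakAtLeast m (Q' a)) : f Q' = m := by
  have hQ (a) : S0.PeakAtLeast m (Q a) := by
    rcases eq_or_ne a i with rfl | hai
    · exact S0.peakAtLeast_of_isPeak le_rfl hQi
    rcases eq_or_ne a j with rfl | haj
    · exact S0.peakAtLeast_of_isPeak m.2.2 hQj
    · exact .inl (hQ0 a hai haj)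
  have hfQ : f Q = m := hQm.antisymm (hP.le_of_forall_peakAtLeast hm hQi.ne_R0 hQ)
  refine hybrid_induction (p := fun W => f W = m) hfQ fun V W b h hWb _ hne hV hW => ?_
  have hVi : (V i).1.IsPeak m := (hV i).elim (fun h => h ▸ hQi) (fun h => h ▸ hi)
  rcases eq_or_ne b i with rfl | hbi
  · exact hP.eq_of_isPeak h (.inr rfl) hVi hW
  have hbj : b ≠ j := fun hbj => hne (hbj ▸ hj.symm)
  have hWj : W j = Q j := (h hbj.symm).symm.trans ((hV j).elim id fun h => h.trans hj)
  have hWb0 : (W b).1 = R0 := hWb ▸ hQ0 b hbi hbj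
  have hVm : f V ≤ m := (hP.le_of_isPeak_oneA h (.inl hWb0) (hWj ▸ hQj)).trans_eq hW
  exact hVm.antisymm <| hP.le_of_forall_peakAtLeast hm hVi.ne_R0 fun a =>
    (hV a).elim (fun h => h ▸ hQ a) (fun h => h ▸ hQ' a)

theorem eq_of_extremes_of_le (hP : PairwiseSP f) (hm : m ∈ Set.range f)
    (hk : (Q k).1.IsPeak zeroA) (hj : (Q j).1.IsPeak oneA) (hQm : f Q ≤ m) (hji : j ≠ i)
    (hi : (R i).1.IsPeak m) (hR : ∀ a, S0.PeakAtLeast m (R a)) : f R = m := by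
  let D := Function.update (Function.update (indiffProfile n) j (Q j)) i (S0.steep m)
  have hDi : D i = S0.steep m := Function.update_self _ _ _
  have hDj : D j = Q j := (Function.update_of_ne hji _ _).trans (Function.update_self _ _ _)
  have hD0 (a) (hai : a ≠ i) (haj : a ≠ j) : (D a).1 = R0 :=
    congrArg Subtype.val
      ((Function.update_of_ne hai _ _).trans (Function.update_of_ne haj _ (indiffProfile n)))
  have hDm : f D ≤ m := hP.le_of_steep_of_extremes hk hj hQm hDi hDj hD0
  let R' := Function.update R j (Q j)
  have hR'j : R' j = Q j := Function.update_self _ _ _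
  have hR' : Set.EqOn R' R {j}ᶜ := eqOn_update_compl R j (Q j)
  have hfR' : f R' = m := by
    refine hP.eq_of_isPeak_oneA_of_le hm hDm (hDi ▸ S0.isPeak_steep m) ((hR' hji.symm) ▸ hi)
      (hDj ▸ hj) (hR'j.trans hDj.symm) hD0 fun a => ?_
    rcases eq_or_ne a j with rfl | haj
    · exact S0.peakAtLeast_of_isPeak m.2.2 (hR'j ▸ hj)
    · exact (hR' haj) ▸ hR a
  have hRm : f R ≤ m := (hP.le_of_isPeak_oneA hR'.symm (.inr rfl) (hR'j ▸ hj)).trans_eq hfR'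
  exact hRm.antisymm (hP.le_of_forall_peakAtLeast hm hi.ne_R0 hR)

end PairwiseSP

theorem stmt_11_general {n : ℕ} (hn : 3 ≤ n) {f : (Fin n → S0) → A} (hPSP : PairwiseSP f)
    {Q : Fin n → S0} {k l : Fin n} (hk : (Q k).1.IsPeak zeroA) (hl : (Q l).1.IsPeak oneA)
    {R : Fin n → S0} (hR : R ≠ indiffProfile n) (hrange : ∃ W, (f W : ℝ) = tmin R)
    (hx : (f Q : ℝ) ≤ tmin R) : (f R : ℝ) = tmin R := by
  obtain ⟨i, m, hm, hi, hRm⟩ := exists_isPeak_tmin hR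
  rw [← hm] at hrange hx ⊢
  obtain ⟨Q', j, hji, hk', hj', hQ'⟩ := hPSP.exists_extremes_ne hn hk hl i
  have hQ'm : f Q' ≤ m := hQ'.trans_le hx
  have hrange' : m ∈ Set.range f := hrange.imp fun _ => Subtype.ext
  exact congrArg Subtype.val (hPSP.eq_of_extremes_of_le hrange' hk' hj' hQ'm hji hi hRm)

/-- With x the value selected at a profile where agents
1,…,n−1 have peak 0 and agent n has peak 1, every profile R ≠ R^{0N} with
x < τ̲(R) gets outcome τ̲(R). -/
theorem stmt_11 (n : ℕ) (hn : 3 ≤ n) (f : (Fin n → S0) → A)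
    (hOnto : Onto f) (hPSP : PairwiseSP f)
    (Rbar : Fin n → S0)
    (h0 : ∀ i : Fin n, (i : ℕ) < n - 1 → (Rbar i).1.IsPeak zeroA)
    (h1 : (Rbar ⟨n - 1, by omega⟩).1.IsPeak oneA)
    (R : Fin n → S0) (hR : R ≠ indiffProfile n)
    (hx : (f Rbar : ℝ) < tmin R) :
    (f R : ℝ) = tmin R := by
  obtain ⟨-, m, hm, -⟩ := exists_isPeak_tmin hR
  have hrange : ∃ W, (f W : ℝ) = tmin R := (hOnto m).imp fun _ hW => hm ▸ congrArg Subtype.val hW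
  exact stmt_11_general hn hPSP (h0 ⟨0, by omega⟩ (Nat.sub_pos_of_lt (by omega))) h1 hR hrange
    hx.le
end

section
/- Let n ≥ 2 and let f : S₀ⁿ → A be onto and strategy-proof. Then f satisfies unanimity on single-peaked profiles: for every profile R ∈ S₀ⁿ in which every agent has a single-peaked preference with a common peak a ∈ A (τ(R_i) = a for all i ∈ N), f(R) = a. -/
/-! Pass from a profile with outcome `a` to one where `a` is everybody's only best alternative by
replacing preferences one agent at a time. If a replacement moved the outcome away from `a`, the
agent, whose new preference has `a` as its only best alternative, would gain by undoing it. -/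

/-- The alternative `a` is the only best one for the preference `r`: nothing else is weakly
preferred to it. For complete `r`, this says that `a` is strictly preferred to all the others. -/
def IsUniqueBest {α : Type*} (r : α → α → Prop) (a : α) : Prop :=
  ∀ b, r b a → b = a

theorem Pref.IsPeak.isUniqueBest {R : Pref} {p : A} (hp : R.IsPeak p) : IsUniqueBest R.rel p := by
  intro b hbp
  rcases lt_trichotomy b p with hlt | heq | hgt
  · exact absurd hbp (hp p b (Or.inr ⟨hlt, le_rfl⟩)).2
  · exact heq
  · exact absurd hbp (hp p b (Or.inl ⟨le_rfl, hgt⟩)).2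

section StrategyProofOn

variable {ι α : Type*} [DecidableEq ι] {D : ι → Type*} {pref : ∀ i, D i → α → α → Prop}
  {f : (∀ i, D i) → α} {Q R : ∀ i, D i} {a : α}

/-- Strategy-proofness of a social choice function on an arbitrary product domain. The types in
`D i` label the admissible preferences of agent `i`, type `t` standing for `pref i t`. -/
def StrategyProofOn (pref : ∀ i, D i → α → α → Prop) (f : (∀ i, D i) → α) : Prop :=
  ∀ (R : ∀ i, D i) (i : ι) (t : D i), pref i (R i) (f R) (f (Function.update R i t))

namespace StrategyProofOn

theorem apply_update_eq_of_isUniqueBest (hf : StrategyProofOn pref f) (hR : f R = a)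
    {i : ι} {t : D i} (ht : IsUniqueBest (pref i t) a) : f (Function.update R i t) = a := by
  have undo : pref i t (f (Function.update R i t)) (f R) := by
    simpa only [Function.update_self, Function.update_idem, Function.update_eq_self] using
      hf (Function.update R i t) i (R i)
  exact ht _ (hR ▸ undo)

theorem apply_piecewise_eq_of_isUniqueBest (hf : StrategyProofOn pref f) (hQ : f Q = a)
    (s : Finset ι) (hR : ∀ i ∈ s, IsUniqueBest (pref i (R i)) a) : f (s.piecewise R Q) = a := by
  induction s using Finset.induction_on with
  | empty => rwa [Finset.piecewise_empty]
  | insert j s _ ih =>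
    rw [Finset.forall_mem_insert] at hR
    rw [Finset.piecewise_insert]
    exact hf.apply_update_eq_of_isUniqueBest (ih hR.2) hR.1

end StrategyProofOn

theorem stmt_15_general [Finite ι] (hf : StrategyProofOn pref f) (ha : a ∈ Set.range f)
    (hR : ∀ i, IsUniqueBest (pref i (R i)) a) : f R = a := by
  obtain ⟨Q, hQ⟩ := ha
  cases nonempty_fintype ι
  simpa only [Finset.piecewise_univ] using
    hf.apply_piecewise_eq_of_isUniqueBest hQ Finset.univ fun i _ => hR i

end StrategyProofOn

theorem StrategyProof.strategyProofOn {n : ℕ} {f : (Fin n → S0) → A} (hf : StrategyProof f) :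
    StrategyProofOn (fun _ (t : S0) => t.1.rel) f :=
  hf

/-- For n ≥ 2, every onto and strategy-proof SCF satisfies
unanimity on single-peaked profiles with a common peak. -/
theorem stmt_15 (n : ℕ) (hn : 2 ≤ n) (f : (Fin n → S0) → A)
    (hOnto : Onto f) (hSP : StrategyProof f)
    (R : Fin n → S0) (a : A) (hpeak : ∀ i : Fin n, (R i).1.IsPeak a) :
    f R = a :=
  stmt_15_general hSP.strategyProofOn (hOnto a) fun i => (hpeak i).isUniqueBest
end
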